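/- arXiv:1305.2206 — 2 statements merged into one kernel-verified Lean document; each statement's English description precedes it below -/
import Mathlib

section
/- For every set D ⊆ Fin (x−1), every finite list H of elements of Fin (y+1), and all natural numbers a and c, the number of h ∈ P̃(T,B,D,H) with t(h) = a and b(h) = c equals the number of h ∈ P̃(T,B,D,H) with t(h) = c and b(h) = a. -/
/-- The number of east steps of `h` shared with the path `Q` (contacts with `Q`). -/
noncomputable def ccount {x y : ℕ} (Q h : Fin x → Fin (y+1)) : ℕ :=
  Nat.card {j : Fin x // h j = Q j}

/-- The descent set of `h`: positions `j` where the `(j+1)`-st east step is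
strictly higher than the `(j+2)`-nd one, i.e. where south steps occur. -/
def descentSet {x y : ℕ} (h : Fin x → Fin (y+1)) : Set (Fin (x-1)) :=
  {j | h ⟨(j : ℕ) + 1, by have := j.isLt; omega⟩ < h ⟨(j : ℕ), by have := j.isLt; omega⟩}

/-- The non-contact height sequence of `h`: the list of heights of the east steps
of `h` that touch neither `B` nor `T`, in order. -/
def ncseq {x y : ℕ} (T B h : Fin x → Fin (y+1)) : List (Fin (y+1)) :=
  ((List.finRange x).filter fun j => decide (B j < h j ∧ h j < T j)).map h

open Classical in
/-- Top flag of the block containing `j`. -/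
def topf (S : ℕ → Prop) (T h : ℕ → ℕ) : ℕ → Prop
  | 0 => h 0 = T 0
  | (j+1) => if S j then topf S T h j else h (j+1) = T (j+1)

/-- Bottom flag of the block containing `j`. -/
def botf (S : ℕ → Prop) (B h : ℕ → ℕ) (j : ℕ) : Prop :=
  ∃ e, j ≤ e ∧ (∀ i, j ≤ i → i < e → S i) ∧ ¬ S e ∧ h e = B e

/-- `j` continues a block. -/
def contf (S : ℕ → Prop) (j : ℕ) : Prop := 0 < j ∧ S (j-1)

theorem contf_succ (S : ℕ → Prop) (j : ℕ) : contf S (j+1) ↔ S j := by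
  simp [contf]

theorem topf_succ {S : ℕ → Prop} {T h : ℕ → ℕ} {j : ℕ} (hS : S j) :
    topf S T h (j+1) ↔ topf S T h j := by
  simp [topf, hS]

theorem topf_start {S : ℕ → Prop} {T h : ℕ → ℕ} {j : ℕ} (hS : ¬ contf S j) :
    topf S T h j ↔ h j = T j := by
  cases j with
  | zero => simp [topf]
  | succ j => rw [contf_succ] at hS; simp [topf, hS]

theorem botf_succ {S : ℕ → Prop} {B h : ℕ → ℕ} {j : ℕ} (hS : S j) :
    botf S B h (j+1) ↔ botf S B h j := by
  constructor
  · rintro ⟨e, h1, h2, h3, h4⟩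
    refine ⟨e, by omega, fun i hi hi' => ?_, h3, h4⟩
    rcases Nat.eq_or_lt_of_le hi with rfl | hlt
    · exact hS
    · exact h2 i hlt hi'
  · rintro ⟨e, h1, h2, h3, h4⟩
    refine ⟨e, ?_, fun i hi hi' => h2 i (by omega) hi', h3, h4⟩
    rcases Nat.eq_or_lt_of_le h1 with rfl | hlt
    · exact absurd hS h3
    · exact hlt

theorem botf_end {S : ℕ → Prop} {B h : ℕ → ℕ} {j : ℕ} (hS : ¬ S j) :
    botf S B h j ↔ h j = B j := by
  constructor
  · rintro ⟨e, h1, h2, h3, h4⟩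
    rcases Nat.eq_or_lt_of_le h1 with rfl | hlt
    · exact h4
    · exact absurd (h2 j le_rfl hlt) hS
  · intro hh
    exact ⟨j, le_rfl, fun i hi hi' => by omega, hS, hh⟩

open Classical in
/-- The involution. -/
noncomputable def phi (S : ℕ → Prop) (T B h : ℕ → ℕ) (j : ℕ) : ℕ :=
  if topf S T h j then
    if botf S B h j then h j else if S j then h (j+1) else B j
  else
    if botf S B h j then (if contf S j then h (j-1) else T j) else h j

open Classical in
theorem phi_eq (S : ℕ → Prop) (T B h : ℕ → ℕ) (j : ℕ) : phi S T B h j =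
    if topf S T h j then
      if botf S B h j then h j else if S j then h (j+1) else B j
    else
      if botf S B h j then (if contf S j then h (j-1) else T j) else h j := rfl

/-- Standing hypotheses. -/
structure Good (x : ℕ) (S : ℕ → Prop) (T B h : ℕ → ℕ) : Prop where
  sx : ∀ j, S j → j + 1 < x
  mT : ∀ j, S j → T j ≤ T (j+1)
  mB : ∀ j, S j → B j ≤ B (j+1)
  lo : ∀ j, B j ≤ h j
  hi : ∀ j, h j ≤ T j
  ds : ∀ j, S j → h (j+1) < h j

section
variable {x : ℕ} {S : ℕ → Prop} {T B h : ℕ → ℕ}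

theorem Good.cont_lt (g : Good x S T B h) {j : ℕ} (hc : contf S j) : h j < T j := by
  cases j with
  | zero => exact absurd hc.1 (lt_irrefl _)
  | succ j =>
    rw [contf_succ] at hc
    have := g.ds j hc; have := g.hi j; have := g.mT j hc; omega

theorem Good.lt_of_S (g : Good x S T B h) {j : ℕ} (hc : S j) : B j < h j := by
  have := g.ds j hc; have := g.lo (j+1); have := g.mB j hc; omega

theorem Good.eqT (g : Good x S T B h) (j : ℕ) : h j = T j ↔ ¬ contf S j ∧ topf S T h j := by
  by_cases hc : contf S j
  · have := g.cont_lt hc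
    simp [hc]; omega
  · simp [hc, topf_start hc]

theorem Good.eqB (g : Good x S T B h) (j : ℕ) : h j = B j ↔ ¬ S j ∧ botf S B h j := by
  by_cases hc : S j
  · have := g.lt_of_S hc
    simp [hc]; omega
  · simp [hc, botf_end hc]

theorem Good.phi_good (g : Good x S T B h) : Good x S T B (phi S T B h) := by
  have key : ∀ j, B j ≤ phi S T B h j ∧ phi S T B h j ≤ T j := by
    intro j
    have h1 := g.lo j
    have h2 := g.hi j
    unfold phi
    split_ifs with a b c d e
    · exact ⟨h1, h2⟩
    · have := g.ds j c; have := g.lo (j+1); have := g.mB j c; omega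
    · omega
    · cases j with
      | zero => exact absurd e.1 (lt_irrefl _)
      | succ j =>
        rw [contf_succ] at e
        have := g.ds j e; have := g.hi j; have := g.mT j e
        simp only [Nat.add_sub_cancel]; omega
    · omega
    · exact ⟨h1, h2⟩
  refine ⟨g.sx, g.mT, g.mB, fun j => (key j).1, fun j => (key j).2, ?_⟩
  intro j hS
  have ht := topf_succ (T := T) (h := h) hS
  have hb := botf_succ (B := B) (h := h) hS
  have hd := g.ds j hS
  unfold phi
  rw [ht, hb, contf_succ]
  simp only [hS, if_true, Nat.add_sub_cancel]
  by_cases a : topf S T h j <;> by_cases b : botf S B h j <;> simp only [a, b, if_true, if_false]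
  · exact hd
  · split_ifs with c
    · exact g.ds _ c
    · have := g.lo (j+1)
      have h3 : h (j+1) ≠ B (j+1) := fun hh => b (hb.1 ((botf_end c).2 hh))
      omega
  · split_ifs with c
    · cases j with
      | zero => exact absurd c.1 (lt_irrefl _)
      | succ j =>
        rw [contf_succ] at c
        exact g.ds j c
    · have := g.hi j
      have h3 : h j ≠ T j := fun hh => a ((topf_start c).2 hh)
      omega
  · exact hd

theorem Good.phi_top (g : Good x S T B h) (j : ℕ) :
    topf S T (phi S T B h) j ↔ botf S B h j := by
  have key : ∀ j, ¬ contf S j → (topf S T (phi S T B h) j ↔ botf S B h j) := by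
    intro j hc
    rw [topf_start hc]
    have e := topf_start (T := T) (h := h) hc
    unfold phi
    by_cases a : topf S T h j <;> by_cases b : botf S B h j <;>
      simp only [a, b, hc, if_true, if_false, iff_true, iff_false]
    · exact e.1 a
    · have e1 := e.1 a
      split_ifs with c
      · have := g.ds j c; omega
      · intro hh
        exact b ((botf_end c).2 (by omega))
    · exact fun hh => a (e.2 hh)
  induction j with
  | zero => exact key 0 (by simp [contf])
  | succ j ih =>
    by_cases hS : S j
    · exact (topf_succ hS).trans (ih.trans (botf_succ hS).symm)
    · exact key _ (by rwa [contf_succ])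

theorem Good.phi_bot (g : Good x S T B h) (j : ℕ) :
    botf S B (phi S T B h) j ↔ topf S T h j := by
  have key : ∀ j, ¬ S j → (botf S B (phi S T B h) j ↔ topf S T h j) := by
    intro j hc
    rw [botf_end hc]
    have e := botf_end (B := B) (h := h) hc
    unfold phi
    by_cases a : topf S T h j <;> by_cases b : botf S B h j <;>
      simp only [a, b, hc, if_true, if_false, iff_true, iff_false]
    · exact e.1 b
    · have e1 := e.1 b
      split_ifs with c
      · cases j with
        | zero => exact absurd c.1 (lt_irrefl _)
        | succ j =>
          rw [contf_succ] at c
          have := g.ds j c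
          simp only [Nat.add_sub_cancel]; omega
      · intro hh
        exact a ((topf_start c).2 (by omega))
    · exact fun hh => b (e.2 hh)
  have main : ∀ n j, x - j ≤ n → (botf S B (phi S T B h) j ↔ topf S T h j) := by
    intro n
    induction n with
    | zero =>
      intro j hj
      exact key j (fun hS => by have := g.sx j hS; omega)
    | succ n ih =>
      intro j hj
      by_cases hS : S j
      · rw [← botf_succ hS, ← topf_succ hS]
        exact ih (j+1) (by omega)
      · exact key j hS
  exact main _ j le_rfl

theorem Good.phi_phi (g : Good x S T B h) : phi S T B (phi S T B h) = h := by
  funext j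
  rw [phi_eq S T B (phi S T B h), g.phi_top, g.phi_bot]
  by_cases a : topf S T h j <;> by_cases b : botf S B h j <;>
      simp only [a, b, if_true, if_false]
  · simp [phi, a, b]
  · split_ifs with c
    · cases j with
      | zero => exact absurd c.1 (lt_irrefl _)
      | succ j =>
        rw [contf_succ] at c
        rw [topf_succ c] at a
        rw [botf_succ c] at b
        simp [phi, a, b, c]
    · exact ((topf_start c).1 a).symm
  · split_ifs with c
    · rw [← topf_succ c] at a
      rw [← botf_succ c] at b
      simp [phi, a, b, contf_succ, c]
    · exact ((botf_end c).1 b).symm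
  · simp [phi, a, b]

/-- prefix list of non-contacts -/
def ncl (T B h : ℕ → ℕ) (k : ℕ) : List ℕ :=
  ((List.range k).filter fun j => decide (B j < h j ∧ h j < T j)).map h

theorem ncl_succ (T B h : ℕ → ℕ) (k : ℕ) :
    ncl T B h (k+1) = ncl T B h k ++ (if B k < h k ∧ h k < T k then [h k] else []) := by
  unfold ncl
  rw [List.range_succ, List.filter_append, List.map_append]
  congr 1
  by_cases c : B k < h k ∧ h k < T k <;> simp [c]

theorem Good.nc_iff (g : Good x S T B h) (j : ℕ) : (B j < h j ∧ h j < T j) ↔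
    ((contf S j ∨ ¬ topf S T h j) ∧ (S j ∨ ¬ botf S B h j)) := by
  have h1 := g.lo j
  have h2 := g.hi j
  have h3 := g.eqT j
  have h4 := g.eqB j
  have e1 : h j < T j ↔ ¬ (h j = T j) := by omega
  have e2 : B j < h j ↔ ¬ (h j = B j) := by omega
  rw [e1, e2, h3, h4]; tauto

open Classical in
theorem Good.ncl_inv (g : Good x S T B h) (k : ℕ) :
    ncl T B (phi S T B h) k ++
      (if contf S k ∧ botf S B h k ∧ ¬ topf S T h k then [phi S T B h k] else []) =
    ncl T B h k ++ (if contf S k ∧ topf S T h k ∧ ¬ botf S B h k then [h k] else []) := by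
  induction k with
  | zero => simp [ncl, contf]
  | succ k ih =>
    rw [ncl_succ, ncl_succ]
    simp only [g.nc_iff, g.phi_good.nc_iff, g.phi_top, g.phi_bot, contf_succ]
    by_cases hS : S k
    · have hp : phi S T B h (k+1) = phi S T B h (k+1) := rfl
      conv_rhs at hp => unfold phi
      have hp0 : phi S T B h k = phi S T B h k := rfl
      conv_rhs at hp0 => unfold phi
      simp only [topf_succ hS, botf_succ hS, contf_succ] at hp ⊢
      by_cases a : topf S T h k <;> by_cases b : botf S B h k <;> by_cases c : contf S k <;>
        simp_all
    · have hp0 : phi S T B h k = phi S T B h k := rfl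
      conv_rhs at hp0 => unfold phi
      by_cases a : topf S T h k <;> by_cases b : botf S B h k <;> by_cases c : contf S k <;>
        simp_all

theorem Good.ncl_eq (g : Good x S T B h) : ncl T B (phi S T B h) x = ncl T B h x := by
  have hc : ¬ contf S x := fun hc => by have := g.sx _ hc.2; have := hc.1; omega
  have := g.ncl_inv x
  simpa [hc] using this

open Classical in
theorem count_inv (S : ℕ → Prop) (B h : ℕ → ℕ) (k : ℕ) :
    (List.range k).countP (fun j => decide (¬ contf S j ∧ botf S B h j)) =
    (List.range k).countP (fun j => decide (¬ S j ∧ botf S B h j)) +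
      (if contf S k ∧ botf S B h k then 1 else 0) := by
  induction k with
  | zero => simp [contf]
  | succ k ih =>
    rw [List.range_succ, List.countP_append, List.countP_append, ih]
    rw [contf_succ]
    by_cases hS : S k
    · rw [botf_succ hS]
      by_cases b : botf S B h k <;> by_cases c : contf S k <;> simp [hS, b, c]
    · by_cases b : botf S B h k <;> by_cases c : contf S k <;> simp [hS, b, c]

theorem Good.count_top (g : Good x S T B h) :
    (List.range x).countP (fun j => decide (phi S T B h j = T j)) =
    (List.range x).countP (fun j => decide (h j = B j)) := by
  classical
  have hc : ¬ contf S x := fun hc => by have := g.sx _ hc.2; have := hc.1; omega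
  have := count_inv S B h x
  simp only [hc, false_and, if_false, add_zero] at this
  simp only [g.phi_good.eqT, g.phi_top, g.eqB]
  convert this
end

/-- extension by zero -/
def ext0 {x y : ℕ} (h : Fin x → Fin (y+1)) (j : ℕ) : ℕ :=
  if hj : j < x then (h ⟨j, hj⟩ : ℕ) else 0

theorem ext0_val {x y : ℕ} (h : Fin x → Fin (y+1)) (j : Fin x) : ext0 h j = h j := by
  simp [ext0]

theorem ext0_inj {x y : ℕ} {h h' : Fin x → Fin (y+1)} (e : ext0 h = ext0 h') : h = h' := by
  funext j
  apply Fin.ext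
  rw [← ext0_val, ← ext0_val, e]

theorem ncseq_ext {x y : ℕ} (T B h : Fin x → Fin (y+1)) :
    (ncseq T B h).map Fin.val = ncl (ext0 T) (ext0 B) (ext0 h) x := by
  unfold ncseq ncl
  rw [← List.map_coe_finRange_eq_range, List.filter_map, List.map_map, List.map_map]
  congr 1
  · funext j; simp [ext0_val]
  · congr 1; funext j; simp [ext0_val]

theorem ccount_ext {x y : ℕ} (Q h : Fin x → Fin (y+1)) :
    ccount Q h = (List.range x).countP (fun j => decide (ext0 h j = ext0 Q j)) := by
  unfold ccount
  rw [← List.map_coe_finRange_eq_range, List.countP_map, Nat.card_eq_fintype_card,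
    Fintype.card_subtype]
  have : (Finset.univ.filter fun j => h j = Q j) =
      ((List.finRange x).filter (fun j => decide (h j = Q j))).toFinset := by
    ext j; simp
  rw [this, List.toFinset_card_of_nodup ((List.nodup_finRange x).filter _),
    List.countP_eq_length_filter]
  congr 2
  funext j; simp [ext0_val, Fin.ext_iff]

/-- forced descents -/
def Sof {x : ℕ} (D : Set (Fin (x-1))) (j : ℕ) : Prop := ∃ hj : j < x - 1, (⟨j, hj⟩ : Fin (x-1)) ∈ D

theorem good_iff {x y : ℕ} {T B : Fin x → Fin (y+1)}
    (hT : Monotone T) (hB : Monotone B) (D : Set (Fin (x-1))) (h : Fin x → Fin (y+1)) :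
    ((∀ j, B j ≤ h j ∧ h j ≤ T j) ∧ D ⊆ descentSet h) ↔
      Good x (Sof D) (ext0 T) (ext0 B) (ext0 h) := by
  constructor
  · rintro ⟨h1, h2⟩
    refine ⟨?_, ?_, ?_, ?_, ?_, ?_⟩
    · rintro j ⟨hj, -⟩; omega
    · rintro j ⟨hj, -⟩
      have a : j < x := by omega
      have b : j + 1 < x := by omega
      simp only [ext0, a, b, dif_pos]
      exact hT (by simp)
    · rintro j ⟨hj, -⟩
      have a : j < x := by omega
      have b : j + 1 < x := by omega
      simp only [ext0, a, b, dif_pos]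
      exact hB (by simp)
    · intro j
      unfold ext0
      split_ifs with a
      · exact (h1 _).1
      · exact le_rfl
    · intro j
      unfold ext0
      split_ifs with a
      · exact (h1 _).2
      · exact le_rfl
    · rintro j ⟨hj, hD⟩
      have a : j < x := by omega
      have b : j + 1 < x := by omega
      simp only [ext0, a, b, dif_pos]
      exact h2 hD
  · intro g
    refine ⟨fun j => ⟨?_, ?_⟩, ?_⟩
    · have := g.lo j; simpa [ext0_val] using this
    · have := g.hi j; simpa [ext0_val] using this
    · intro j hj
      have := g.ds j ⟨j.2, hj⟩
      have a : (j : ℕ) < x := by omega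
      have b : (j : ℕ) + 1 < x := by omega
      simp only [ext0, a, b, dif_pos] at this
      exact this

/-- The involution on the original objects. -/
noncomputable def Phi {x y : ℕ} (T B : Fin x → Fin (y+1)) (D : Set (Fin (x-1)))
    (h : Fin x → Fin (y+1)) : Fin x → Fin (y+1) := fun j =>
  ⟨min (phi (Sof D) (ext0 T) (ext0 B) (ext0 h) j) y, by omega⟩

theorem ext0_Phi {x y : ℕ} {T B : Fin x → Fin (y+1)} {D : Set (Fin (x-1))}
    {h : Fin x → Fin (y+1)} (g : Good x (Sof D) (ext0 T) (ext0 B) (ext0 h)) :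
    ext0 (Phi T B D h) = phi (Sof D) (ext0 T) (ext0 B) (ext0 h) := by
  funext j
  have h1 := g.phi_good.hi j
  by_cases hj : j < x
  · have h2 : ext0 T j ≤ y := by
      simp only [ext0, hj, dif_pos]; omega
    have h3 : ext0 (Phi T B D h) j =
        min (phi (Sof D) (ext0 T) (ext0 B) (ext0 h) j) y := by
      conv_lhs => unfold ext0
      rw [dif_pos hj]; rfl
    rw [h3]
    exact min_eq_left (h1.trans h2)
  · have h2 : ext0 T j = 0 := by simp [ext0, hj]
    have h3 : ext0 (Phi T B D h) j = 0 := by simp [ext0, hj]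
    omega

theorem card_sup {x y : ℕ} (T B : Fin x → Fin (y+1))
    (hT : Monotone T) (hB : Monotone B)
    (D : Set (Fin (x-1))) (H : List (Fin (y+1))) (a c : ℕ) :
    Nat.card {h : Fin x → Fin (y+1) // ((∀ j, B j ≤ h j ∧ h j ≤ T j) ∧
        ncseq T B h = H ∧ ccount T h = a ∧ ccount B h = c) ∧ D ⊆ descentSet h}
    = Nat.card {h : Fin x → Fin (y+1) // ((∀ j, B j ≤ h j ∧ h j ≤ T j) ∧
        ncseq T B h = H ∧ ccount T h = c ∧ ccount B h = a) ∧ D ⊆ descentSet h} := by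
  have key : ∀ (a c : ℕ) (h : Fin x → Fin (y+1)), (((∀ j, B j ≤ h j ∧ h j ≤ T j) ∧
        ncseq T B h = H ∧ ccount T h = a ∧ ccount B h = c) ∧ D ⊆ descentSet h) →
      ((((∀ j, B j ≤ Phi T B D h j ∧ Phi T B D h j ≤ T j) ∧
        ncseq T B (Phi T B D h) = H ∧ ccount T (Phi T B D h) = c ∧ ccount B (Phi T B D h) = a)
          ∧ D ⊆ descentSet (Phi T B D h)) ∧ Phi T B D (Phi T B D h) = h) := by
    rintro a c h ⟨⟨h1, h2, h3, h4⟩, h5⟩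
    have g := (good_iff hT hB D h).1 ⟨h1, h5⟩
    have e := ext0_Phi g
    have g' := g.phi_good
    rw [← e] at g'
    have e' := ext0_Phi g'
    obtain ⟨k1, k2⟩ := (good_iff hT hB D _).2 g'
    have pp : Phi T B D (Phi T B D h) = h := by
      apply ext0_inj
      rw [e', e, g.phi_phi]
    refine ⟨⟨⟨k1, ?_, ?_, ?_⟩, k2⟩, pp⟩
    · rw [← h2]
      apply List.map_injective_iff.2 Fin.val_injective
      have := g.ncl_eq
      rw [← e, ← ncseq_ext, ← ncseq_ext] at this
      exact this
    · have := g.count_top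
      rw [← e, ← ccount_ext, ← ccount_ext] at this
      rw [this, h4]
    · have := g'.count_top
      rw [← e', ← ccount_ext, ← ccount_ext, pp] at this
      rw [← this, h3]
  exact Nat.card_congr
    { toFun := fun h => ⟨Phi T B D h.1, (key a c h.1 h.2).1⟩
      invFun := fun h => ⟨Phi T B D h.1, (key c a h.1 h.2).1⟩
      left_inv := fun h => Subtype.ext (key a c h.1 h.2).2
      right_inv := fun h => Subtype.ext (key c a h.1 h.2).2 }

theorem incl_excl {α ι : Type*} [Finite α] [Finite ι] (P Q : α → Prop) (d : α → Set ι)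
    (hPQ : ∀ S, Nat.card {a // P a ∧ S ⊆ d a} = Nat.card {a // Q a ∧ S ⊆ d a}) (D : Set ι) :
    Nat.card {a // P a ∧ d a = D} = Nat.card {a // Q a ∧ d a = D} := by
  classical
  have := Fintype.ofFinite α
  have := Fintype.ofFinite ι
  have split : ∀ (P : α → Prop) (D : Set ι), Nat.card {a // P a ∧ D ⊆ d a} =
      Nat.card {a // P a ∧ d a = D} +
        ∑ E ∈ Finset.univ.filter (fun E : Set ι => D ⊂ E), Nat.card {a // P a ∧ d a = E} := by
    intro P D
    simp only [Nat.card_eq_fintype_card, Fintype.card_subtype]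
    have h1 := Finset.card_eq_sum_card_fiberwise (f := d)
      (s := Finset.univ.filter (fun a => P a ∧ D ⊆ d a))
      (t := insert D (Finset.univ.filter (fun E : Set ι => D ⊂ E))) (by
        intro a ha
        simp only [Finset.coe_filter, Finset.mem_univ, true_and, Set.mem_ofPred_eq] at ha
        simp only [Finset.coe_insert, Finset.coe_filter, Finset.mem_univ, true_and,
          Set.mem_insert_iff, Set.mem_ofPred_eq]
        rcases eq_or_ssubset_of_subset ha.2 with h | h
        · exact Or.inl h.symm
        · exact Or.inr h)
    rw [h1, Finset.sum_insert (by simp [ssubset_irrefl])]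
    congr 1
    · congr 1
      ext a; simp only [Finset.mem_filter, Finset.mem_univ, true_and]
      constructor
      · rintro ⟨⟨p, -⟩, q⟩; exact ⟨p, q⟩
      · rintro ⟨p, q⟩; exact ⟨⟨p, q.ge⟩, q⟩
    · apply Finset.sum_congr rfl
      intro E hE
      simp only [Finset.mem_filter, Finset.mem_univ, true_and] at hE
      congr 1
      ext a; simp only [Finset.mem_filter, Finset.mem_univ, true_and]
      constructor
      · rintro ⟨⟨p, -⟩, q⟩; exact ⟨p, q⟩
      · rintro ⟨p, q⟩; exact ⟨⟨p, q ▸ hE.subset⟩, q⟩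
  induction D using (wellFounded_gt (α := Set ι)).induction with
  | _ D ih =>
    have h1 := hPQ D
    rw [split P D, split Q D] at h1
    have h2 := Finset.sum_congr (s₁ := Finset.univ.filter (fun E : Set ι => D ⊂ E)) rfl
      (fun E hE => ih E (Finset.mem_filter.1 hE).2)
    omega

/-- The distribution of `(t, b)` over `P̃(T,B,D,H)` is symmetric. -/
theorem stmt4 {x y : ℕ} (T B : Fin x → Fin (y+1))
    (hT : Monotone T) (hB : Monotone B) (hTB : ∀ j, B j ≤ T j)
    (D : Set (Fin (x-1))) (H : List (Fin (y+1))) (a c : ℕ) :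
    Nat.card {h : Fin x → Fin (y+1) // (∀ j, B j ≤ h j ∧ h j ≤ T j) ∧
        descentSet h = D ∧ ncseq T B h = H ∧ ccount T h = a ∧ ccount B h = c}
    = Nat.card {h : Fin x → Fin (y+1) // (∀ j, B j ≤ h j ∧ h j ≤ T j) ∧
        descentSet h = D ∧ ncseq T B h = H ∧ ccount T h = c ∧ ccount B h = a} := by
  have h1 := incl_excl _ _ (descentSet (x := x) (y := y))
    (fun S => card_sup T B hT hB S H a c) D
  have r : ∀ a c : ℕ, Nat.card {h : Fin x → Fin (y+1) // (∀ j, B j ≤ h j ∧ h j ≤ T j) ∧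
        descentSet h = D ∧ ncseq T B h = H ∧ ccount T h = a ∧ ccount B h = c} =
      Nat.card {h : Fin x → Fin (y+1) // ((∀ j, B j ≤ h j ∧ h j ≤ T j) ∧
        ncseq T B h = H ∧ ccount T h = a ∧ ccount B h = c) ∧ descentSet h = D} := by
    intro a c
    exact Nat.card_congr (Equiv.subtypeEquivRight fun h => by tauto)
  rw [r, r]
  exact h1
end

section
/- There exists an involution Φ : P̃(T,B) → P̃(T,B) (i.e., Φ(Φ(h)) = h for all h) such that for every h ∈ P̃(T,B): Φ(h) has the same descent set as h, Φ(h) has the same non-contact height sequence as h, t(Φ(h)) = b(h), and b(Φ(h)) = t(h). -/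
namespace S8

def stp (T B g : ℕ → ℕ) (j : ℕ) : ℤ :=
  (if g j = B j then 1 else 0) - (if g j = T j then 1 else 0)

def Ht (T B g : ℕ → ℕ) (j : ℕ) : ℤ := ∑ i ∈ Finset.range j, stp T B g i

theorem Ht_succ (T B g : ℕ → ℕ) (j : ℕ) : Ht T B g (j+1) = Ht T B g j + stp T B g j := by
  simp [Ht, Finset.sum_range_succ]

structure Core (x : ℕ) (T B h k : ℕ → ℕ) (p q : ℕ) : Prop where
  hp : p < x
  hq : q < x
  hpB : h p = B p
  hpT : B p < T p
  kqT : k q = T q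
  kqB : B q < T q
  out : ∀ i, (i < p ∧ i < q ∨ p < i ∧ q < i) → k i = h i
  r : ∀ i, p ≤ i → i < q →
    k i = h (i+1) ∧ B i < k i ∧ k i < T i ∧ B (i+1) < h (i+1) ∧ h (i+1) < T (i+1)
  l : ∀ i, q ≤ i → i < p →
    k (i+1) = h i ∧ B i < h i ∧ h i < T i ∧ B (i+1) < k (i+1) ∧ k (i+1) < T (i+1)
  D : ∀ i, i + 1 < x → (k (i+1) < k i ↔ h (i+1) < h i)

section
variable {x : ℕ} {T B h k k' : ℕ → ℕ} {p q q' : ℕ}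

theorem Core.rk (c : Core x T B h k p q) (i : ℕ) (h1 : p ≤ i) (h2 : i < q) :
    B i < k i ∧ k i < T i := ⟨(c.r i h1 h2).2.1, (c.r i h1 h2).2.2.1⟩

theorem Core.rh (c : Core x T B h k p q) (i : ℕ) (h1 : p < i) (h2 : i ≤ q) :
    B i < h i ∧ h i < T i := by
  have := c.r (i-1) (by omega) (by omega)
  rw [show i - 1 + 1 = i by omega] at this
  exact this.2.2.2

theorem Core.lh (c : Core x T B h k p q) (i : ℕ) (h1 : q ≤ i) (h2 : i < p) :
    B i < h i ∧ h i < T i := ⟨(c.l i h1 h2).2.1, (c.l i h1 h2).2.2.1⟩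

theorem Core.lk (c : Core x T B h k p q) (i : ℕ) (h1 : q < i) (h2 : i ≤ p) :
    B i < k i ∧ k i < T i := by
  have := c.l (i-1) (by omega) (by omega)
  rw [show i - 1 + 1 = i by omega] at this
  exact this.2.2.2

theorem Core.cases (c : Core x T B h k p q) (i : ℕ) :
    k i = h i ∧ i ≠ p ∧ i ≠ q ∨
    (B i < h i ∧ h i < T i ∧ B i < k i ∧ k i < T i ∧ i ≠ p ∧ i ≠ q) ∨
    (i = p ∧ i ≠ q ∧ h i = B i ∧ B i < T i ∧ B i < k i ∧ k i < T i) ∨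
    (i ≠ p ∧ i = q ∧ k i = T i ∧ B i < T i ∧ B i < h i ∧ h i < T i) ∨
    (i = p ∧ i = q ∧ h i = B i ∧ k i = T i ∧ B i < T i) := by
  have h1 := c.rk i
  have h2 := c.rh i
  have h3 := c.lh i
  have h4 := c.lk i
  have h5 := c.out i
  have h6 := c.hpB
  have h7 := c.hpT
  have h8 := c.kqT
  have h9 := c.kqB
  by_cases e1 : i = p
  · by_cases e2 : i = q
    · grind
    · subst e1; grind
  · by_cases e2 : i = q
    · subst e2; grind
    · grind

theorem Core.indB (c : Core x T B h k p q) (i : ℕ) :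
    (if k i = B i then (1:ℤ) else 0) = (if h i = B i then 1 else 0) - (if i = p then 1 else 0) := by
  rcases c.cases i with a | a | a | a | a <;> grind

theorem Core.indT (c : Core x T B h k p q) (i : ℕ) :
    (if k i = T i then (1:ℤ) else 0) = (if h i = T i then 1 else 0) + (if i = q then 1 else 0) := by
  rcases c.cases i with a | a | a | a | a <;> grind

theorem Core.stp (c : Core x T B h k p q) (i : ℕ) :
    stp T B k i = stp T B h i - (if i = p then 1 else 0) - (if i = q then 1 else 0) := by
  unfold S8.stp
  rw [c.indB, c.indT]; ring

theorem Core.Ht (c : Core x T B h k p q) (j : ℕ) :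
    Ht T B k j = Ht T B h j - (if p < j then 1 else 0) - (if q < j then 1 else 0) := by
  induction j with
  | zero => simp [S8.Ht]
  | succ j ih =>
    rw [Ht_succ, Ht_succ, ih, c.stp]
    grind

theorem stp_nc {g : ℕ → ℕ} {i : ℕ} (h : B i < g i ∧ g i < T i) : stp T B g i = 0 := by
  unfold stp
  rw [if_neg (by omega), if_neg (by omega)]; rfl

theorem Ht_const {g : ℕ → ℕ} {a b : ℕ} (hab : a ≤ b)
    (h : ∀ i, a ≤ i → i < b → B i < g i ∧ g i < T i) : Ht T B g b = Ht T B g a := by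
  induction b, hab using Nat.le_induction with
  | base => rfl
  | succ n hn ih =>
    rw [Ht_succ, stp_nc (h n hn (by omega)), ih (fun i h1 h2 => h i h1 (by omega))]; ring

theorem Core.HtP (c : Core x T B h k p q) : S8.Ht T B h (p+1) = S8.Ht T B h p + 1 := by
  rw [Ht_succ]; unfold S8.stp
  have := c.hpB; have := c.hpT
  rw [if_pos (by omega), if_neg (by omega)]; rfl

theorem Core.HtR (c : Core x T B h k p q) (hpq : p < q) :
    S8.Ht T B h q = S8.Ht T B h (p+1) :=
  Ht_const hpq (fun i h1 h2 => c.rh i (by omega) (by omega))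

theorem Core.HtL (c : Core x T B h k p q) (hpq : q ≤ p) :
    S8.Ht T B h p = S8.Ht T B h q :=
  Ht_const hpq (fun i h1 h2 => c.lh i (by omega) (by omega))

def IsP (x : ℕ) (T B h : ℕ → ℕ) (p : ℕ) : Prop :=
  ∀ j ≤ x, Ht T B h j ≤ Ht T B h (p+1) ∧ (j ≤ p → Ht T B h j < Ht T B h (p+1))

def IsQ (x : ℕ) (T B h : ℕ → ℕ) (q : ℕ) : Prop :=
  ∀ j ≤ x, Ht T B h j ≤ Ht T B h q ∧ (q < j → Ht T B h j < Ht T B h q)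

theorem Core.PQ (c : Core x T B h k p q) (hP : IsP x T B h p) : IsQ x T B k q := by
  intro j hj
  have h1 := hP j hj
  have h2 := c.HtP
  have h3 := c.HtR
  have h4 := c.HtL
  rw [c.Ht, c.Ht]
  have h5 : p < q ∨ q ≤ p := by omega
  grind

theorem Core.HtR' (c : Core x T B h k p q) (j : ℕ) (h1 : p ≤ j) (h2 : j ≤ q) :
    S8.Ht T B k j = S8.Ht T B k q :=
  (Ht_const h2 (fun i h1 h2 => c.rk i (by omega) (by omega))).symm

theorem Core.QP (c : Core x T B h k p q) (hQ : IsQ x T B k q) : IsP x T B h p := by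
  intro j hj
  have h1 := hQ j hj
  have h2 := c.HtP
  have h3 := c.HtR
  have h4 := c.HtL
  rw [c.Ht, c.Ht] at h1
  have h5 : p < q ∨ q ≤ p := by omega
  grind

/-- uniqueness of the target -/
theorem Core.le_of (hT : ∀ i, i + 1 < x → T i ≤ T (i+1)) (c : Core x T B h k p q) (c' : Core x T B h k' p q') : q' ≤ q := by
  by_contra hlt
  push Not at hlt
  have hsh : ∀ i, q ≤ i → i < q' → k (i+1) = k' i := by
    intro i h1 h2
    by_cases hi : i < p
    · rw [(c.l i h1 hi).1, c'.out i (by omega)]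
    · rw [(c'.r i (by omega) h2).1, c.out (i+1) (by omega)]
  have hlt' : ∀ i, q ≤ i → i < q' → k' i < T i := by
    intro i h1 h2
    by_cases hi : i < p
    · rw [c'.out i (by omega)]; exact (c.lh i h1 hi).2
    · exact (c'.rk i (by omega) h2).2
  have hd : ∀ i, i + 1 < x → (k (i+1) < k i ↔ k' (i+1) < k' i) := fun i hi =>
    (c.D i hi).trans (c'.D i hi).symm
  have hx := c'.hq
  -- all ascents
  have key : ∀ n, ∀ i, q ≤ i → i + n + 1 = q' → k i ≤ k (i+1) := by
    intro n
    induction n with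
    | zero =>
      intro i h1 h2
      have a1 := hd i (by omega)
      have a2 := hlt' i h1 (by omega)
      have a3 := c'.kqT
      have a4 := hT i (by omega)
      rw [← h2] at a3
      simp only [Nat.add_zero] at a3
      omega
    | succ n ih =>
      intro i h1 h2
      have a1 := hd i (by omega)
      have a2 := ih (i+1) (by omega) (by omega)
      have a3 := hsh i h1 (by omega)
      have a4 := hsh (i+1) (by omega) (by omega)
      omega
  have a1 := key (q' - q - 1) q le_rfl (by omega)
  rw [hsh q le_rfl hlt, c.kqT] at a1
  have := hlt' q le_rfl hlt
  omega
theorem Core.uniq (hT : ∀ i, i + 1 < x → T i ≤ T (i+1))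
    (c : Core x T B h k p q) (c' : Core x T B h k' p q') : k = k' := by
  have e : q = q' := le_antisymm (c'.le_of hT c) (c.le_of hT c')
  subst e
  funext i
  by_cases hi : i = q
  · rw [hi, c.kqT, c'.kqT]
  · by_cases h1 : i < p
    · by_cases h2 : i < q
      · rw [c.out i (by omega), c'.out i (by omega)]
      · have a := c.l (i-1) (by omega) (by omega)
        have b := c'.l (i-1) (by omega) (by omega)
        rw [show i - 1 + 1 = i by omega] at a b
        rw [a.1, b.1]
    · by_cases h2 : i < q
      · rw [(c.r i (by omega) h2).1, (c'.r i (by omega) h2).1]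
      · by_cases h3 : i = p
        · have a := c.l (i-1) (by omega) (by omega)
          have b := c'.l (i-1) (by omega) (by omega)
          rw [show i - 1 + 1 = i by omega] at a b
          rw [a.1, b.1]
        · rw [c.out i (by omega), c'.out i (by omega)]

theorem Core.le_of' {h' : ℕ → ℕ} {p' : ℕ} (hB : ∀ i, i + 1 < x → B i ≤ B (i+1))
    (c : Core x T B h k p q) (c' : Core x T B h' k p' q) : p' ≤ p := by
  by_contra hlt
  push Not at hlt
  have hsh : ∀ i, p ≤ i → i < p' → h (i+1) = h' i := by
    intro i h1 h2
    by_cases hi : i < q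
    · rw [← (c.r i h1 hi).1, c'.out i (by omega)]
    · rw [← (c'.l i (by omega) h2).1, c.out (i+1) (by omega)]
  have hlt' : ∀ i, p ≤ i → i < p' → B (i+1) < h (i+1) := by
    intro i h1 h2
    by_cases hi : i < q
    · exact (c.rh (i+1) (by omega) (by omega)).1
    · rw [hsh i h1 h2, ← (c'.l i (by omega) h2).1]
      exact (c'.lk (i+1) (by omega) (by omega)).1
  have hd : ∀ i, i + 1 < x → (h (i+1) < h i ↔ h' (i+1) < h' i) := fun i hi =>
    (c.D i hi).symm.trans (c'.D i hi)
  have hx := c'.hp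
  have key : ∀ i, p ≤ i → i < p' → h i ≤ h (i+1) := by
    intro i h1
    induction i, h1 using Nat.le_induction with
    | base =>
      intro h2
      have := hlt' p le_rfl h2
      have := hB p (by omega)
      have := c.hpB
      omega
    | succ n hn ih =>
      intro h2
      have a1 := ih (by omega)
      have a2 := hsh n hn (by omega)
      have a3 := hsh (n+1) (by omega) (by omega)
      have a4 := hd n (by omega)
      omega
  have a1 := key (p'-1) (by omega) (by omega)
  have a2 := hsh (p'-1) (by omega) (by omega)
  have a3 := hlt' (p'-1) (by omega) (by omega)
  have a4 := hd (p'-1) (by omega)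
  rw [show p' - 1 + 1 = p' by omega] at *
  have := c'.hpB
  omega

theorem Core.uniq' {h' : ℕ → ℕ} {p' : ℕ} (hB : ∀ i, i + 1 < x → B i ≤ B (i+1))
    (c : Core x T B h k p q) (c' : Core x T B h' k p' q) : h = h' := by
  have e : p = p' := le_antisymm (c'.le_of' hB c) (c.le_of' hB c')
  subst e
  funext i
  by_cases hi : i = p
  · rw [hi, c.hpB, c'.hpB]
  · by_cases h1 : i < p
    · by_cases h2 : i < q
      · rw [← c.out i (by omega), ← c'.out i (by omega)]
      · rw [← (c.l i (by omega) h1).1, ← (c'.l i (by omega) h1).1]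
    · by_cases h2 : i ≤ q
      · have a := c.r (i-1) (by omega) (by omega)
        have b := c'.r (i-1) (by omega) (by omega)
        rw [show i - 1 + 1 = i by omega] at a b
        rw [← a.1, ← b.1]
      · rw [← c.out i (by omega), ← c'.out i (by omega)]

theorem exL (P : ℕ → Prop) (p : ℕ) :
    ∃ q ≤ p, (∀ i, q < i → i ≤ p → P i) ∧ (0 < q → ¬ P q) := by
  induction p with
  | zero => exact ⟨0, le_rfl, by intros; omega, by omega⟩
  | succ n ih =>
    by_cases hP : P (n+1)
    · obtain ⟨q, h1, h2, h3⟩ := ih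
      refine ⟨q, by omega, ?_, h3⟩
      intro i a b
      rcases Nat.lt_or_ge n i with c | c
      · rw [show i = n+1 by omega]; exact hP
      · exact h2 i a c
    · exact ⟨n+1, le_rfl, by intros; omega, fun _ => hP⟩

theorem exR (P : ℕ → Prop) (x p : ℕ) (hp : p < x) :
    ∃ q, p ≤ q ∧ q < x ∧ (∀ i, p ≤ i → i < q → P i) ∧ (q + 1 < x → ¬ P q) := by
  induction x, hp using Nat.le_induction with
  | base => exact ⟨p, le_rfl, by omega, by intros; omega, by omega⟩
  | succ n hn ih =>
    obtain ⟨q, h1, h2, h3, h4⟩ := ih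
    by_cases hq : q + 1 < n
    · exact ⟨q, h1, by omega, h3, fun _ => h4 hq⟩
    · by_cases hP : P q
      · refine ⟨q+1, by omega, by omega, ?_, by omega⟩
        intro i a b
        rcases Nat.lt_or_ge i q with c | c
        · exact h3 i a c
        · rw [show i = q by omega]; exact hP
      · exact ⟨q, h1, by omega, h3, fun _ => hP⟩

def FR (x : ℕ) (T B h : ℕ → ℕ) (p : ℕ) : Prop := ∀ r, p < r → r < x →
  (∀ i, p < i → i < r → B i < h i ∧ h i < T i) → B r < h r ∨ h r = T r

def FL (T B h : ℕ → ℕ) (p : ℕ) : Prop := ∀ r, r < p →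
  (∀ i, r < i → i < p → B i < h i ∧ h i < T i) → h r < T r ∨ h r = B r

theorem mono_of (hT : ∀ i, i + 1 < x → T i ≤ T (i+1)) (i j : ℕ) (hij : i ≤ j) (hj : j < x) :
    T i ≤ T j := by
  induction j, hij using Nat.le_induction with
  | base => rfl
  | succ n hn ih => exact (ih (by omega)).trans (hT n hj)

theorem FR.all (H : FR x T B h p) {m : ℕ} (hm : m ≤ x)
    (hlt : ∀ r, p < r → r < m → h r < T r) : ∀ r, p < r → r < m → B r < h r ∧ h r < T r := by
  intro r
  induction r using Nat.strong_induction_on with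
  | _ r ih =>
    intro h1 h2
    have := H r h1 (by omega) (fun i a b => ih i b a (by omega))
    have := hlt r h1 h2
    omega

theorem FL.all (H : FL T B h p) {m : ℕ}
    (hlt : ∀ r, m ≤ r → r < p → B r < h r) : ∀ r, m ≤ r → r < p → B r < h r ∧ h r < T r := by
  have : ∀ n r, m ≤ r → r < p → p - r = n → B r < h r ∧ h r < T r := by
    intro n
    induction n using Nat.strong_induction_on with
    | _ n ih =>
      intro r h1 h2 hn
      have := H r h2 (fun i a b => ih (p-i) (by omega) i (by omega) b rfl)
      have := hlt r h1 h2
      omega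
  exact fun r a b => this _ r a b rfl

theorem exist_right (hT : ∀ i, i + 1 < x → T i ≤ T (i+1)) (hB : ∀ i, i + 1 < x → B i ≤ B (i+1))
    (hb : ∀ i, i < x → B i ≤ h i ∧ h i ≤ T i) (hp : p < x) (hpB : h p = B p) (hpT : B p < T p)
    (fR : FR x T B h p)
    (hc : 0 < p → h (p-1) ≤ B p ∨ (p + 1 < x ∧ h (p+1) < h (p-1))) :
    ∃ k q, Core x T B h k p q := by
  obtain ⟨q, h1, h2, h3, h4⟩ := exR (fun i => h i ≤ h (i+1) ∧ h (i+1) < T i) x p hp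
  have mT := mono_of hT
  have mB := mono_of hB
  have nc : ∀ r, p < r → r < q+1 → B r < h r ∧ h r < T r := by
    apply fR.all (by omega)
    intro r a b
    have := h3 (r-1) (by omega) (by omega)
    have := hT (r-1) (by omega)
    rw [show r - 1 + 1 = r by omega] at *
    omega
  refine ⟨fun i => if i < p then h i else if i < q then h (i+1) else if i = q then T q else h i, q,
    hp, h2, hpB, hpT, ?_, ?_, ?_, ?_, ?_, ?_⟩
  · simp; intro; omega
  · rcases Nat.lt_or_ge p q with a | a
    · have := nc q a (by omega); omega
    · have : p = q := by omega
      rw [← this]; exact hpT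
  · intro i hi; grind
  · intro i a b
    have e1 := nc (i+1) (by omega) (by omega)
    have e2 := hB i (by omega)
    have e3 := h3 i a b
    have : ¬ i < p := by omega
    simp only [this, b, if_true, if_false]
    constructorm* _ ∧ _ <;> first | trivial | rfl | omega
  · intros; omega
  · intro i hi
    have d1 := h3 i
    have d2 := h3 (i+1)
    have d3 := hT i hi
    have d4 := hb i (by omega)
    have d5 := hb (i+1) (by omega)
    have d6 := hB i hi
    rcases Nat.lt_or_ge (i+1) p with a | a
    · have : i < p := by omega
      simp [a, this]
    · rcases Nat.eq_or_lt_of_le a with a | a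
      · subst a
        have hc' := hc (by omega)
        simp only [Nat.add_sub_cancel] at hc'
        rcases Nat.lt_or_ge (i+1) q with b | b
        · have n := nc (i+1+1) (by omega) (by omega)
          have := h3 (i+1) (by omega) b
          have := hB (i+1) (by omega)
          simp [b]
          omega
        · have : i + 1 = q := by omega
          subst this
          have h4' : i + 1 + 1 < x → ¬ (h (i+1) ≤ h (i+1+1) ∧ h (i+1+1) < T (i+1)) := h4
          have d7 := hb (i+1+1)
          have := hB (i+1)
          simp
          omega
      · have : ¬ i < p := by omega
        have : ¬ (i + 1 < p) := by omega
        rcases Nat.lt_or_ge i q with b | b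
        · rcases Nat.lt_or_ge (i+1) q with b' | b'
          · simp [*]; omega
          · have : i + 1 = q := by omega
            subst this
            simp [*]; omega
        · rcases Nat.eq_or_lt_of_le b with b' | b'
          · subst b'
            have h4' : ¬ (h q ≤ h (q+1) ∧ h (q+1) < T q) := h4 hi
            simp [*]; omega
          · have : ¬ i < q := by omega
            have : ¬ i + 1 < q := by omega
            have : i ≠ q := by omega
            have : i + 1 ≠ q := by omega
            simp [*]

theorem exist_left (hT : ∀ i, i + 1 < x → T i ≤ T (i+1)) (hB : ∀ i, i + 1 < x → B i ≤ B (i+1))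
    (hb : ∀ i, i < x → B i ≤ h i ∧ h i ≤ T i) (hp : p < x) (hpB : h p = B p) (hpT : B p < T p)
    (fL : FL T B h p) (hp0 : 0 < p)
    (hc : B p < h (p-1) ∧ (p + 1 < x → h (p-1) ≤ h (p+1))) :
    ∃ k q, Core x T B h k p q := by
  obtain ⟨q, h1, h3, h4⟩ := exL (fun i => h i < h (i-1)) p
  have mB := mono_of hB
  have hqp : q < p := by
    by_contra hh
    have : q = p := by omega
    subst this
    have := h4 hp0
    omega
  have hgt : ∀ n r, r + n + 1 = p → q ≤ r → B p < h r := by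
    intro n
    induction n with
    | zero =>
      intro r e hr
      rw [show r = p - 1 by omega]; exact hc.1
    | succ n ih =>
      intro r e hr
      have := ih (r+1) (by omega) (by omega)
      have := h3 (r+1) (by omega) (by omega)
      simp only [Nat.add_sub_cancel] at this
      omega
  have hgt : ∀ r, q ≤ r → r < p → B p < h r := fun r a b => hgt (p - r - 1) r (by omega) a
  have nc : ∀ r, q ≤ r → r < p → B r < h r ∧ h r < T r := by
    apply fL.all
    intro r a b
    have := hgt r a b
    have := mB r p (by omega) hp
    omega
  have n0 : ∀ r, q ≤ r → r < p → h (r+1) < h r := fun r a b => h3 (r+1) (by omega) (by omega)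
  refine ⟨fun i => if i < q then h i else if i = q then T q else if i ≤ p then h (i-1) else h i, q,
    hp, by omega, hpB, hpT, ?_, ?_, ?_, ?_, ?_, ?_⟩
  · simp
  · have := nc q le_rfl hqp; omega
  · intro i hi; grind
  · intros; omega
  · intro i a b
    have e1 := nc i a b
    have e2 := hgt i a b
    have e3 := mB (i+1) p (by omega) hp
    have e4 := hT i (by omega)
    have : ¬ i + 1 < q := by omega
    have : i + 1 ≠ q := by omega
    have : i + 1 ≤ p := by omega
    simp only [*, if_true, if_false, Nat.add_sub_cancel]
    constructorm* _ ∧ _ <;> first | trivial | rfl | omega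
  · intro i hi
    have d3 := hT i hi
    have d4 := hb i (by omega)
    have d5 := hb (i+1) (by omega)
    have d6 := hB i hi
    have d1 := n0 i
    have d2 := n0 (i-1)
    rcases Nat.lt_or_ge i q with a | a
    · rcases Nat.lt_or_ge (i+1) q with b | b
      · simp [a, b]
      · have : i + 1 = q := by omega
        subst this
        have := h4 (by omega)
        simp only [Nat.add_sub_cancel] at this
        simp
        omega
    · have : ¬ i < q := by omega
      have : ¬ i + 1 < q := by omega
      have : i + 1 ≠ q := by omega
      rcases Nat.eq_or_lt_of_le a with b | b
      · subst b
        have := nc q le_rfl hqp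
        have : q + 1 ≤ p := by omega
        simp [*]
      · have : i ≠ q := by omega
        rw [show i - 1 + 1 = i by omega] at d2
        rcases Nat.lt_or_ge i p with e | e
        · have : i + 1 ≤ p := by omega
          have : i ≤ p := by omega
          simp [*]
        · have : ¬ i + 1 ≤ p := by omega
          rcases Nat.eq_or_lt_of_le e with e | e
          · subst e
            have := hc.2 hi
            simp [*]; omega
          · have : ¬ i ≤ p := by omega
            simp [*]

theorem exist_fwd (hT : ∀ i, i + 1 < x → T i ≤ T (i+1)) (hB : ∀ i, i + 1 < x → B i ≤ B (i+1))
    (hb : ∀ i, i < x → B i ≤ h i ∧ h i ≤ T i) (hp : p < x) (hpB : h p = B p) (hpT : B p < T p)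
    (fR : FR x T B h p) (fL : FL T B h p) :
    ∃ k q, Core x T B h k p q := by
  by_cases hc : 0 < p → h (p-1) ≤ B p ∨ (p + 1 < x ∧ h (p+1) < h (p-1))
  · exact exist_right hT hB hb hp hpB hpT fR hc
  · push Not at hc
    exact exist_left hT hB hb hp hpB hpT fL hc.1 hc.2

theorem exist_right' (hT : ∀ i, i + 1 < x → T i ≤ T (i+1)) (hB : ∀ i, i + 1 < x → B i ≤ B (i+1))
    (hb : ∀ i, i < x → B i ≤ k i ∧ k i ≤ T i) (hq : q < x) (kqT : k q = T q) (kqB : B q < T q)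
    (fL : FL T B k q)
    (hc : q + 1 < x → T q ≤ k (q+1) ∨ (0 < q ∧ k (q+1) < k (q-1))) :
    ∃ h p, Core x T B h k p q := by
  obtain ⟨p, h1, h3, h4⟩ := exL (fun i => k (i-1) ≤ k i ∧ B i < k (i-1)) q
  have h3' : ∀ i, p ≤ i → i < q → k i ≤ k (i+1) ∧ B (i+1) < k i :=
    fun i a b => h3 (i+1) (by omega) (by omega)
  have nc : ∀ r, p ≤ r → r < q → B r < k r ∧ k r < T r := by
    apply fL.all
    intro r a b
    have := h3' r a b
    have := hB r (by omega)
    omega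
  refine ⟨fun i => if i < p then k i else if i = p then B p else if i ≤ q then k (i-1) else k i, p,
    by omega, hq, ?_, ?_, kqT, kqB, ?_, ?_, ?_, ?_⟩
  · simp
  · rcases Nat.lt_or_ge p q with a | a
    · have := nc p le_rfl a; omega
    · have : p = q := by omega
      rw [this]; exact kqB
  · intro i hi; grind
  · intro i a b
    have e1 := nc i a b
    have e2 := hT i (by omega)
    have e3 := h3' i a b
    have : ¬ i + 1 < p := by omega
    have : i + 1 ≠ p := by omega
    have : i + 1 ≤ q := by omega
    simp only [*, if_true, if_false, Nat.add_sub_cancel]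
    constructorm* _ ∧ _ <;> first | trivial | rfl | omega
  · intros; omega
  · intro i hi
    have d1 := h3' i
    have d2 := h3' (i-1)
    have d3 := hT i hi
    have d4 := hb i (by omega)
    have d5 := hb (i+1) (by omega)
    have d6 := hB i hi
    rcases Nat.lt_or_ge i p with a | a
    · rcases Nat.lt_or_ge (i+1) p with b | b
      · simp [a, b]
      · have : i + 1 = p := by omega
        subst this
        have h4' := h4 (by omega)
        simp only [Nat.add_sub_cancel] at h4'
        simp
        omega
    · have : ¬ i < p := by omega
      have : ¬ i + 1 < p := by omega
      have : i + 1 ≠ p := by omega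
      rcases Nat.eq_or_lt_of_le a with b | b
      · subst b
        rcases Nat.lt_or_ge p q with e | e
        · have : p + 1 ≤ q := by omega
          simp [*]; omega
        · have : p = q := by omega
          subst this
          have hc' := hc hi
          have d7 := h4
          have d8 := hT (p-1)
          have d9 := hb (p-1)
          have d10 := hB (p-1)
          rw [show p - 1 + 1 = max 1 p by omega] at *
          simp
          by_cases p0 : 0 < p
          · rw [show max 1 p = p by omega] at *
            omega
          · omega
      · have : i ≠ p := by omega
        rw [show i - 1 + 1 = i by omega] at d2
        rcases Nat.lt_or_ge i q with e | e
        · have : i + 1 ≤ q := by omega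
          have : i ≤ q := by omega
          simp [*]; omega
        · have : ¬ i + 1 ≤ q := by omega
          rcases Nat.eq_or_lt_of_le e with e | e
          · subst e
            have := hc hi
            simp [*]; omega
          · have : ¬ i ≤ q := by omega
            simp [*]

theorem exist_left' (hT : ∀ i, i + 1 < x → T i ≤ T (i+1)) (hB : ∀ i, i + 1 < x → B i ≤ B (i+1))
    (hb : ∀ i, i < x → B i ≤ k i ∧ k i ≤ T i) (hq : q < x) (kqT : k q = T q) (kqB : B q < T q)
    (fR : FR x T B k q) (hq0 : q + 1 < x)
    (hc : k (q+1) < T q ∧ (0 < q → k (q-1) ≤ k (q+1))) :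
    ∃ h p, Core x T B h k p q := by
  obtain ⟨p, h1, h2, h3, h4⟩ := exR (fun i => k (i+1) < k i) x q hq
  have mT := mono_of hT
  have hqp : q < p := by
    by_contra hh
    have : q = p := by omega
    subst this
    have := h4 hq0
    omega
  have hgt : ∀ r, q + 1 ≤ r → r ≤ p → k r < T q := by
    intro r a
    induction r, a using Nat.le_induction with
    | base => intro; exact hc.1
    | succ n hn ih =>
      intro b
      have := ih (by omega)
      have := h3 n (by omega) (by omega)
      omega
  have nc : ∀ r, q < r → r < p + 1 → B r < k r ∧ k r < T r := by
    apply fR.all (by omega)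
    intro r a b
    have := hgt r a (by omega)
    have := mT q r (by omega) (by omega)
    omega
  refine ⟨fun i => if i < q then k i else if i < p then k (i+1) else if i = p then B p else k i, p,
    h2, hq, ?_, ?_, kqT, kqB, ?_, ?_, ?_, ?_⟩
  · simp; intro; omega
  · have := nc p hqp (by omega); omega
  · intro i hi; grind
  · intros; omega
  · intro i a b
    have e1 := nc (i+1) (by omega) (by omega)
    have e2 := hgt (i+1) (by omega) (by omega)
    have e3 := mT q i a (by omega)
    have e4 := hB i (by omega)
    have : ¬ i < q := by omega
    simp only [*, if_true, if_false]
    constructorm* _ ∧ _ <;> first | trivial | rfl | omega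
  · intro i hi
    have d3 := hT i hi
    have d4 := hb i (by omega)
    have d5 := hb (i+1) (by omega)
    have d6 := hB i hi
    have d1 := h3 i
    have d2 := h3 (i+1)
    rcases Nat.lt_or_ge (i+1) q with a | a
    · have : i < q := by omega
      simp [a, this]
    · rcases Nat.eq_or_lt_of_le a with a | a
      · subst a
        have := hc.2 (by omega)
        simp only [Nat.add_sub_cancel] at this
        simp [*]; omega
      · have : ¬ i < q := by omega
        have : ¬ (i + 1 < q) := by omega
        rcases Nat.lt_or_ge i p with b | b
        · rcases Nat.lt_or_ge (i+1) p with b' | b'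
          · simp [*]; omega
          · have : i + 1 = p := by omega
            subst this
            have := nc (i+1) (by omega) (by omega)
            simp [*]; omega
        · rcases Nat.eq_or_lt_of_le b with b' | b'
          · subst b'
            have h4' := h4 hi
            simp [*]; omega
          · have : ¬ i < p := by omega
            have : ¬ i + 1 < p := by omega
            have : i ≠ p := by omega
            have : i + 1 ≠ p := by omega
            simp [*]

theorem exist_bwd (hT : ∀ i, i + 1 < x → T i ≤ T (i+1)) (hB : ∀ i, i + 1 < x → B i ≤ B (i+1))
    (hb : ∀ i, i < x → B i ≤ k i ∧ k i ≤ T i) (hq : q < x) (kqT : k q = T q) (kqB : B q < T q)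
    (fR : FR x T B k q) (fL : FL T B k q) :
    ∃ h p, Core x T B h k p q := by
  by_cases hc : q + 1 < x → T q ≤ k (q+1) ∨ (0 < q ∧ k (q+1) < k (q-1))
  · exact exist_right' hT hB hb hq kqT kqB fL hc
  · push Not at hc
    exact exist_left' hT hB hb hq kqT kqB fR hc.1 hc.2

theorem stp_pos {i : ℕ} (hb : B i ≤ h i ∧ h i ≤ T i) (hs : 0 < stp T B h i) :
    h i = B i ∧ B i < T i := by
  unfold stp at hs; grind

theorem stp_neg {i : ℕ} (hb : B i ≤ h i ∧ h i ≤ T i) (hs : stp T B h i < 0) :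
    h i = T i ∧ B i < T i := by
  unfold stp at hs; grind

theorem stp_B {i : ℕ} (h1 : h i = B i) (h2 : B i < T i) : stp T B h i = 1 := by
  unfold stp; grind

theorem stp_T {i : ℕ} (h1 : h i = T i) (h2 : B i < T i) : stp T B h i = -1 := by
  unfold stp; grind

/-- forward existence from `IsP` -/
theorem fwd (hT : ∀ i, i + 1 < x → T i ≤ T (i+1)) (hB : ∀ i, i + 1 < x → B i ≤ B (i+1))
    (hb : ∀ i, i < x → B i ≤ h i ∧ h i ≤ T i) (hp : p < x) (hP : IsP x T B h p) :
    ∃ k q, Core x T B h k p q := by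
  have hs : 0 < stp T B h p := by
    have := (hP p hp.le).2 le_rfl
    rw [Ht_succ] at this; omega
  obtain ⟨a, b⟩ := stp_pos (hb p hp) hs
  have s1 := stp_B a b
  have e0 := Ht_succ T B h p
  refine exist_fwd hT hB hb hp a b ?_ ?_
  · intro r h1 h2 h3
    by_contra hh
    have e1 := Ht_const (T := T) (B := B) (g := h) (a := p+1) (b := r) h1
      (fun i a b => h3 i (by omega) b)
    have e2 := Ht_succ T B h r
    have := hb r h2
    rw [stp_B (by omega) (by omega)] at e2
    have := (hP (r+1) h2).1
    omega
  · intro r h1 h3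
    by_contra hh
    have e1 := Ht_const (T := T) (B := B) (g := h) (a := r+1) (b := p) h1
      (fun i a b => h3 i (by omega) b)
    have e2 := Ht_succ T B h r
    have := hb r (by omega)
    rw [stp_T (by omega) (by omega)] at e2
    have := (hP r (by omega)).2 (by omega)
    omega

theorem bwd (hT : ∀ i, i + 1 < x → T i ≤ T (i+1)) (hB : ∀ i, i + 1 < x → B i ≤ B (i+1))
    (hb : ∀ i, i < x → B i ≤ k i ∧ k i ≤ T i) (hq : q < x) (hQ : IsQ x T B k q) :
    ∃ h p, Core x T B h k p q := by
  have hs : stp T B k q < 0 := by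
    have := (hQ (q+1) hq).2 (by omega)
    rw [Ht_succ] at this; omega
  obtain ⟨a, b⟩ := stp_neg (hb q hq) hs
  have s1 := stp_T a b
  have e0 := Ht_succ T B k q
  refine exist_bwd hT hB hb hq a b ?_ ?_
  · intro r h1 h2 h3
    by_contra hh
    have e1 := Ht_const (T := T) (B := B) (g := k) (a := q+1) (b := r) h1
      (fun i a b => h3 i (by omega) b)
    have e2 := Ht_succ T B k r
    have := hb r h2
    rw [stp_B (by omega) (by omega)] at e2
    have := (hQ (r+1) h2).2 (by omega)
    omega
  · intro r h1 h3
    by_contra hh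
    have e1 := Ht_const (T := T) (B := B) (g := k) (a := r+1) (b := q) h1
      (fun i a b => h3 i (by omega) b)
    have e2 := Ht_succ T B k r
    have := hb r (by omega)
    rw [stp_T (by omega) (by omega)] at e2
    have := (hQ r (by omega)).1
    omega

/-- non-contact list -/
def ncl (T B g : ℕ → ℕ) (n : ℕ) : List ℕ :=
  ((List.range n).filter fun j => decide (B j < g j ∧ g j < T j)).map g

theorem ncl_succ_nc {g : ℕ → ℕ} {n : ℕ} (h : B n < g n ∧ g n < T n) :
    ncl T B g (n+1) = ncl T B g n ++ [g n] := by
  simp [ncl, List.range_succ, List.filter_append, h]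

theorem ncl_succ_c {g : ℕ → ℕ} {n : ℕ} (h : ¬ (B n < g n ∧ g n < T n)) :
    ncl T B g (n+1) = ncl T B g n := by
  simp only [ncl, List.range_succ, List.filter_append]
  simp [h]

theorem ncl_congr_succ {g g' : ℕ → ℕ} {n : ℕ} (h : g n = g' n)
    (hh : ncl T B g n = ncl T B g' n) : ncl T B g (n+1) = ncl T B g' (n+1) := by
  by_cases hc : B n < g n ∧ g n < T n
  · rw [ncl_succ_nc hc, ncl_succ_nc (h ▸ hc), hh, h]
  · rw [ncl_succ_c hc, ncl_succ_c (h ▸ hc), hh]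

theorem Core.ncl (c : Core x T B h k p q) (n : ℕ) :
    (n ≤ p → n ≤ q → ncl T B k n = ncl T B h n) ∧
    (p ≤ n → n ≤ q → ncl T B k n = ncl T B h (n+1)) ∧
    (q ≤ n → n ≤ p → ncl T B k (n+1) = ncl T B h n) ∧
    (p < n → q < n → ncl T B k n = ncl T B h n) := by
  have hpc : ¬ (B p < h p ∧ h p < T p) := by have := c.hpB; omega
  have kqc : ¬ (B q < k q ∧ k q < T q) := by have := c.kqT; omega
  have z : S8.ncl T B k 0 = S8.ncl T B h 0 := rfl
  have A : ∀ n, n ≤ p → n ≤ q → S8.ncl T B k n = S8.ncl T B h n := by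
    intro n
    induction n with
    | zero => intros; rfl
    | succ n ih =>
      intro a b
      exact ncl_congr_succ (c.out n (by omega)) (ih (by omega) (by omega))
  have B1 : ∀ n, p ≤ n → n ≤ q → S8.ncl T B k n = S8.ncl T B h (n+1) := by
    intro n a
    induction n, a using Nat.le_induction with
    | base => intro b; rw [ncl_succ_c hpc]; exact A p le_rfl b
    | succ n hn ih =>
      intro b
      rw [ncl_succ_nc (c.rk n hn (by omega)), ncl_succ_nc (c.rh (n+1) (by omega) b),
        ih (by omega), (c.r n hn (by omega)).1]
  have B2 : ∀ n, q ≤ n → n ≤ p → S8.ncl T B k (n+1) = S8.ncl T B h n := by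
    intro n a
    induction n, a using Nat.le_induction with
    | base => intro b; rw [ncl_succ_c kqc]; exact A q b le_rfl
    | succ n hn ih =>
      intro b
      rw [ncl_succ_nc (c.lk (n+1) (by omega) b), ncl_succ_nc (c.lh n hn (by omega)),
        ih (by omega), (c.l n hn (by omega)).1]
  refine ⟨A n, B1 n, B2 n, ?_⟩
  intro a b
  have : max p q + 1 ≤ n := by omega
  induction n, this using Nat.le_induction with
  | base =>
    rcases le_total p q with e | e
    · rw [max_eq_right e, ncl_succ_c kqc]; exact B1 q e le_rfl
    · rw [max_eq_left e, ncl_succ_c hpc]; exact B2 p e le_rfl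
  | succ n hn ih =>
    exact ncl_congr_succ (c.out n (by omega)) (ih (by omega) (by omega))

theorem Core.bd (c : Core x T B h k p q) (i : ℕ) : 
    (B i ≤ h i ∧ h i ≤ T i) ↔ (B i ≤ k i ∧ k i ≤ T i) := by
  rcases c.cases i with a | a | a | a | a <;> omega

theorem Core.sum (c : Core x T B h k p q) :
    ∑ i ∈ Finset.range x, ((if k i = B i then (1:ℤ) else 0) + (if k i = T i then 1 else 0)) =
    ∑ i ∈ Finset.range x, ((if h i = B i then (1:ℤ) else 0) + (if h i = T i then 1 else 0)) := by
  have h1 := c.hp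
  have h2 := c.hq
  simp only [c.indB, c.indT, Finset.sum_add_distrib, Finset.sum_sub_distrib]
  simp [h1, h2]

def Mx (x : ℕ) (T B h : ℕ → ℕ) : ℤ :=
  (Finset.range (x+1)).sup' ⟨0, by simp⟩ (Ht T B h)

theorem le_Mx {j : ℕ} (hj : j ≤ x) : Ht T B h j ≤ Mx x T B h :=
  Finset.le_sup' (Ht T B h) (by simp; omega)

theorem ex_Mx (x : ℕ) (T B h : ℕ → ℕ) : ∃ j ≤ x, Ht T B h j = Mx x T B h := by
  obtain ⟨j, h1, h2⟩ := Finset.exists_mem_eq_sup' (s := Finset.range (x+1)) ⟨0, by simp⟩ (Ht T B h)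
  exact ⟨j, by simp at h1; omega, h2.symm⟩

theorem IsP.mx (hP : IsP x T B h p) (hp : p < x) : Mx x T B h = Ht T B h (p+1) := by
  obtain ⟨j, h1, h2⟩ := ex_Mx x T B h
  exact le_antisymm (h2 ▸ (hP j h1).1) (le_Mx hp)

theorem IsQ.mx (hQ : IsQ x T B h q) (hq : q < x) : Mx x T B h = Ht T B h q := by
  obtain ⟨j, h1, h2⟩ := ex_Mx x T B h
  exact le_antisymm (h2 ▸ (hQ j h1).1) (le_Mx hq.le)

theorem ex_P (hM : 0 < Mx x T B h) : ∃ p < x, IsP x T B h p := by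
  classical
  have H := ex_Mx x T B h
  obtain ⟨h1, h2⟩ := Nat.find_spec H
  have h3 := fun m => Nat.find_min H (m := m)
  generalize Nat.find H = n at *
  have hn : n ≠ 0 := by
    rintro rfl
    simp [Ht] at h2; omega
  refine ⟨n - 1, by omega, ?_⟩
  intro j hj
  rw [show n - 1 + 1 = n by omega, h2]
  refine ⟨le_Mx hj, fun a => ?_⟩
  have := h3 j (by omega)
  have := le_Mx (T := T) (B := B) (h := h) hj
  grind

theorem ex_Q (hM : Ht T B h x < Mx x T B h) : ∃ q < x, IsQ x T B h q := by
  classical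
  have H : ∃ n, n ≤ x ∧ Ht T B h (x - n) = Mx x T B h := by
    obtain ⟨j, h1, h2⟩ := ex_Mx x T B h
    exact ⟨x - j, by omega, by rw [show x - (x - j) = j by omega]; exact h2⟩
  obtain ⟨h1, h2⟩ := Nat.find_spec H
  have h3 := fun m => Nat.find_min H (m := m)
  generalize Nat.find H = n at *
  have hn : n ≠ 0 := by
    rintro rfl
    simp at h2; omega
  refine ⟨x - n, by omega, ?_⟩
  intro j hj
  rw [h2]
  refine ⟨le_Mx hj, fun a => ?_⟩
  have := h3 (x - j) (by omega)
  rw [show x - (x - j) = j by omega] at this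
  have := le_Mx (T := T) (B := B) (h := h) hj
  grind

theorem Core.mx (c : Core x T B h k p q) (hP : IsP x T B h p) :
    Mx x T B k + 1 = Mx x T B h := by
  rw [hP.mx c.hp, (c.PQ hP).mx c.hq, c.Ht]
  have h2 := c.HtP
  have h3 := c.HtR
  have h4 := c.HtL
  have h5 : p < q ∨ q ≤ p := by omega
  grind

theorem IsP.inj {p' : ℕ} (h1 : IsP x T B h p) (h2 : IsP x T B h p') (hp : p < x) (hp' : p' < x) :
    p = p' := by
  rcases lt_trichotomy p p' with a | a | a
  · have := (h2 (p+1) hp).2 (by omega)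
    have := (h1 (p'+1) hp').1
    omega
  · exact a
  · have := (h1 (p'+1) hp').2 (by omega)
    have := (h2 (p+1) hp).1
    omega

theorem IsQ.inj {p' : ℕ} (h1 : IsQ x T B h p) (h2 : IsQ x T B h p') (hp : p < x) (hp' : p' < x) :
    p = p' := by
  rcases lt_trichotomy p p' with a | a | a
  · have := (h1 p' hp'.le).2 (by omega)
    have := (h2 p hp.le).1
    omega
  · exact a
  · have := (h2 p hp.le).2 (by omega)
    have := (h1 p' hp'.le).1
    omega

def R (x : ℕ) (T B h k : ℕ → ℕ) : Prop := ∃ p q, Core x T B h k p q ∧ IsP x T B h p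

end

theorem abstr {X K : Type*} (M Q : X → ℕ) (F : X → K) (r : X → X → Prop)
    (h1 : ∀ h, 0 < M h → ∃ k, r h k) (h2 : ∀ k, 0 < Q k → ∃ h, r h k)
    (h3 : ∀ h k k', r h k → r h k' → k = k') (h4 : ∀ h h' k, r h k → r h' k → h = h')
    (h5 : ∀ h k, r h k → M h = M k + 1 ∧ Q k = Q h + 1 ∧ F k = F h) :
    ∃ Φ : X → X, (∀ h, Φ (Φ h) = h) ∧ ∀ h, F (Φ h) = F h ∧ M (Φ h) = Q h ∧ Q (Φ h) = M h := by
  classical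
  let e : X → X := fun h => if H : 0 < M h then (h1 h H).choose else h
  let f : X → X := fun h => if H : 0 < Q h then (h2 h H).choose else h
  have he : ∀ h, 0 < M h → r h (e h) := by
    intro h H; simp only [e, dif_pos H]; exact (h1 h H).choose_spec
  have hf : ∀ h, 0 < Q h → r (f h) h := by
    intro h H; simp only [f, dif_pos H]; exact (h2 h H).choose_spec
  have E : ∀ n h, n ≤ M h → f^[n] (e^[n] h) = h ∧ M (e^[n] h) + n = M h ∧
      Q (e^[n] h) = Q h + n ∧ F (e^[n] h) = F h := by
    intro n
    induction n with
    | zero => intros; simp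
    | succ n ih =>
      intro h hn
      obtain ⟨a1, a2, a3, a4⟩ := ih h (by omega)
      have rr := he (e^[n] h) (by omega)
      obtain ⟨b1, b2, b3⟩ := h5 _ _ rr
      have rf := hf (e (e^[n] h)) (by omega)
      have := h4 _ _ _ rf rr
      rw [Function.iterate_succ_apply' e, Function.iterate_succ_apply f, this]
      refine ⟨a1, by omega, by omega, b3.trans a4⟩
  have G : ∀ n h, n ≤ Q h → e^[n] (f^[n] h) = h ∧ Q (f^[n] h) + n = Q h ∧
      M (f^[n] h) = M h + n ∧ F (f^[n] h) = F h := by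
    intro n
    induction n with
    | zero => intros; simp
    | succ n ih =>
      intro h hn
      obtain ⟨a1, a2, a3, a4⟩ := ih h (by omega)
      have rr := hf (f^[n] h) (by omega)
      obtain ⟨b1, b2, b3⟩ := h5 _ _ rr
      have rf := he (f (f^[n] h)) (by omega)
      have := h3 _ _ _ rf rr
      rw [Function.iterate_succ_apply' f, Function.iterate_succ_apply e, this]
      refine ⟨a1, by omega, by omega, b3.symm.trans a4⟩
  let Φ : X → X := fun h => if Q h ≤ M h then e^[M h - Q h] h else f^[Q h - M h] h
  have P : ∀ h, Φ (Φ h) = h ∧ F (Φ h) = F h ∧ M (Φ h) = Q h ∧ Q (Φ h) = M h := by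
    intro h
    by_cases c : Q h ≤ M h
    · obtain ⟨a1, a2, a3, a4⟩ := E (M h - Q h) h (by omega)
      have s : Φ h = e^[M h - Q h] h := if_pos c
      have m1 : M (Φ h) = Q h := by rw [s]; omega
      have m2 : Q (Φ h) = M h := by rw [s]; omega
      refine ⟨?_, by rw [s, a4], m1, m2⟩
      by_cases c' : Q h = M h
      · have s1 : Φ h = h := by rw [s, c']; simp
        rw [s1, s1]
      · have : Φ (Φ h) = f^[Q (Φ h) - M (Φ h)] (Φ h) := if_neg (by omega)
        rw [this, m1, m2, s, a1]
    · obtain ⟨a1, a2, a3, a4⟩ := G (Q h - M h) h (by omega)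
      have s : Φ h = f^[Q h - M h] h := if_neg c
      have m1 : M (Φ h) = Q h := by rw [s]; omega
      have m2 : Q (Φ h) = M h := by rw [s]; omega
      refine ⟨?_, by rw [s, a4], m1, m2⟩
      have : Φ (Φ h) = e^[M (Φ h) - Q (Φ h)] (Φ h) := if_pos (by omega)
      rw [this, m1, m2, s, a1]
  exact ⟨Φ, fun h => (P h).1, fun h => (P h).2⟩

def ext {x y : ℕ} (h : Fin x → Fin (y+1)) (j : ℕ) : ℕ :=
  if hj : j < x then (h ⟨j, hj⟩).val else 0

theorem ext_of {x y : ℕ} (h : Fin x → Fin (y+1)) (j : Fin x) : ext h j = (h j).val := by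
  simp [ext]

theorem ext_of' {x y : ℕ} (h : Fin x → Fin (y+1)) {j : ℕ} (hj : j < x) :
    ext h j = (h ⟨j, hj⟩).val := by
  simp [ext, hj]

theorem ext_inj {x y : ℕ} {h k : Fin x → Fin (y+1)} (H : ext h = ext k) : h = k := by
  funext j
  apply Fin.ext
  rw [← ext_of, ← ext_of, H]

theorem ext_mono {x y : ℕ} {T : Fin x → Fin (y+1)} (hT : Monotone T) :
    ∀ i, i + 1 < x → ext T i ≤ ext T (i+1) := by
  intro i hi
  rw [ext_of' T hi, ext_of' T (show i < x by omega)]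
  exact hT (by simp [Fin.le_def])

theorem ext_surj {x y : ℕ} {T B : Fin x → Fin (y+1)} {g : ℕ → ℕ}
    (hb : ∀ i, i < x → ext B i ≤ g i ∧ g i ≤ ext T i) (ho : ∀ i, x ≤ i → g i = 0) :
    ∃ k : {h : Fin x → Fin (y+1) // ∀ j, B j ≤ h j ∧ h j ≤ T j}, ext k.1 = g := by
  have lt : ∀ j : Fin x, g j < y + 1 := by
    intro j
    have := (hb j j.2).2
    rw [ext_of] at this
    have := (T j).2
    omega
  refine ⟨⟨fun j => ⟨g j, lt j⟩, ?_⟩, ?_⟩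
  · intro j
    have := hb j j.2
    rw [ext_of, ext_of] at this
    exact this
  · funext i
    by_cases hi : i < x
    · simp [ext, hi]
    · simp [ext, hi, ho i (by omega)]

theorem ccount_eq {x y : ℕ} (Q h : Fin x → Fin (y+1)) :
    (ccount Q h : ℤ) = ∑ i ∈ Finset.range x, (if ext h i = ext Q i then (1:ℤ) else 0) := by
  classical
  rw [Finset.sum_range (fun i => if ext h i = ext Q i then (1:ℤ) else 0)]
  simp only [ext_of, ccount, Nat.card_eq_fintype_card, Fintype.card_subtype, Fin.val_inj]
  simp

theorem ncseq_eq {x y : ℕ} (T B h : Fin x → Fin (y+1)) :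
    (ncseq T B h).map Fin.val = ncl (ext T) (ext B) (ext h) x := by
  unfold ncseq ncl
  rw [← List.map_coe_finRange_eq_range, List.filter_map, List.map_map, List.map_map]
  have e1 : (fun j : ℕ => decide (ext B j < ext h j ∧ ext h j < ext T j)) ∘ (Fin.val : Fin x → ℕ)
      = fun j => decide (B j < h j ∧ h j < T j) := by
    funext j; simp [ext_of]
  have e2 : ext h ∘ (Fin.val : Fin x → ℕ) = Fin.val ∘ h := by
    funext j; simp [ext_of]
  rw [e1, e2]

end S8

open S8 in
theorem stmt8 {x y : ℕ} (T B : Fin x → Fin (y+1))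
    (hT : Monotone T) (hB : Monotone B) (hTB : ∀ j, B j ≤ T j) :
    ∃ Φ : {h : Fin x → Fin (y+1) // ∀ j, B j ≤ h j ∧ h j ≤ T j} →
          {h : Fin x → Fin (y+1) // ∀ j, B j ≤ h j ∧ h j ≤ T j},
      (∀ h, Φ (Φ h) = h) ∧
      ∀ h, descentSet (Φ h).1 = descentSet h.1 ∧
        ncseq T B (Φ h).1 = ncseq T B h.1 ∧
        ccount T (Φ h).1 = ccount B h.1 ∧
        ccount B (Φ h).1 = ccount T h.1 := by
  have mT := ext_mono hT
  have mB := ext_mono hB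
  have bd : ∀ h : {h : Fin x → Fin (y+1) // ∀ j, B j ≤ h j ∧ h j ≤ T j},
      ∀ i, i < x → ext B i ≤ ext h.1 i ∧ ext h.1 i ≤ ext T i := by
    intro h i hi
    rw [ext_of' _ hi, ext_of' _ hi, ext_of' _ hi]
    exact h.2 ⟨i, hi⟩
  have zo : ∀ (h : Fin x → Fin (y+1)) i, x ≤ i → ext h i = 0 := by
    intro h i hi; simp [ext, hi]
  have M0 : ∀ g, 0 ≤ Mx x (ext T) (ext B) g := fun g => by
    have := le_Mx (T := ext T) (B := ext B) (h := g) (Nat.zero_le x)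
    simpa [Ht] using this
  have MH : ∀ g, Ht (ext T) (ext B) g x ≤ Mx x (ext T) (ext B) g := fun g => le_Mx le_rfl
  have HX : ∀ h : Fin x → Fin (y+1),
      Ht (ext T) (ext B) (ext h) x = (ccount B h : ℤ) - ccount T h := by
    intro h
    rw [ccount_eq, ccount_eq, ← Finset.sum_sub_distrib]; rfl
  obtain ⟨Φ, h1, h2⟩ := abstr
    (X := {h : Fin x → Fin (y+1) // ∀ j, B j ≤ h j ∧ h j ≤ T j})
    (fun h => (Mx x (ext T) (ext B) (ext h.1)).toNat)
    (fun h => (Mx x (ext T) (ext B) (ext h.1) - Ht (ext T) (ext B) (ext h.1) x).toNat)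
    (fun h => (descentSet h.1, ncseq T B h.1, (ccount B h.1 : ℤ) + ccount T h.1))
    (fun h k => R x (ext T) (ext B) (ext h.1) (ext k.1))
    (by
      intro h hM
      obtain ⟨p, hp, hP⟩ := ex_P (show 0 < Mx x (ext T) (ext B) (ext h.1) by omega)
      obtain ⟨g, q, c⟩ := fwd mT mB (bd h) hp hP
      obtain ⟨k, hk⟩ := ext_surj (T := T) (B := B) (g := g)
        (fun i hi => (c.bd i).1 (bd h i hi))
        (fun i hi => by rw [c.out i (by have := c.hp; have := c.hq; omega)]; exact zo _ i hi)
      exact ⟨k, p, q, by rw [hk]; exact c, hP⟩)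
    (by
      intro k hM
      obtain ⟨q, hq, hQ⟩ := ex_Q (x := x) (T := ext T) (B := ext B) (h := ext k.1) (by omega)
      obtain ⟨g, p, c⟩ := bwd mT mB (bd k) hq hQ
      obtain ⟨h, hh⟩ := ext_surj (T := T) (B := B) (g := g)
        (fun i hi => (c.bd i).2 (bd k i hi))
        (fun i hi => by rw [← c.out i (by have := c.hp; have := c.hq; omega)]; exact zo _ i hi)
      exact ⟨h, p, q, by rw [hh]; exact c, by rw [hh]; exact c.QP hQ⟩)
    (by
      rintro h k k' ⟨p, q, c, hP⟩ ⟨p', q', c', hP'⟩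
      have := hP.inj hP' c.hp c'.hp
      subst this
      exact Subtype.ext (ext_inj (c.uniq mT c')))
    (by
      rintro h h' k ⟨p, q, c, hP⟩ ⟨p', q', c', hP'⟩
      have := (c.PQ hP).inj (c'.PQ hP') c.hq c'.hq
      subst this
      exact Subtype.ext (ext_inj (c.uniq' mB c')))
    (by
      rintro h k ⟨p, q, c, hP⟩
      have e1 := c.mx hP
      have e2 := c.Ht x
      rw [if_pos c.hp, if_pos c.hq] at e2
      have e3 := M0 (ext k.1)
      have e4 := MH (ext h.1)
      refine ⟨by omega, by omega, ?_⟩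
      refine Prod.ext ?_ (Prod.ext ?_ ?_)
      · ext j
        have hj := j.2
        have := c.D j (by omega)
        rw [ext_of' _ (show (j:ℕ) + 1 < x by omega), ext_of' _ (show (j:ℕ) < x by omega),
          ext_of' _ (show (j:ℕ) + 1 < x by omega), ext_of' _ (show (j:ℕ) < x by omega)] at this
        exact this
      · apply List.map_injective_iff.2 Fin.val_injective
        rw [ncseq_eq, ncseq_eq]
        exact (c.ncl x).2.2.2 c.hp c.hq
      · have := c.sum
        rw [Finset.sum_add_distrib, Finset.sum_add_distrib] at this
        simp only [ccount_eq]
        exact this)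
  refine ⟨Φ, h1, fun h => ?_⟩
  obtain ⟨a, b, c⟩ := h2 h
  simp only [Prod.mk.injEq] at a
  obtain ⟨a1, a2, a3⟩ := a
  have b1 := M0 (ext h.1)
  have b2 := M0 (ext (Φ h).1)
  have b3 := MH (ext h.1)
  have b4 := MH (ext (Φ h).1)
  have b5 := HX h.1
  have b6 := HX (Φ h).1
  exact ⟨a1, a2, by omega, by omega⟩
end
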